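/- arXiv:1910.00173 — 2 statements merged into one kernel-verified Lean document; each statement's English description precedes it below -/
import Mathlib

section
/- There is an absolute constant C such that for every α ∈ (0, 1/1000] and all x, y > 0 the function ξ̄ satisfies ξ̄(x,y) ≤ 0 and |ξ̄(x,y)| ≤ C α² · ((x²+y²)^{α/2} / (1 + (x²+y²)^{α/2})) · (y^α / (1 + y^α)³) · min(1, x^{1+α}/y^{1+α}). Consequently, writing R = (x²+y²)^{α/2} and β = arctan(y/x), one has |ξ̄| ≤ C (α² R² /(1+R)) · ( 1_{β<π/4} · sin^α(β)/(1 + R sin^α(β))³ + 1_{β≥π/4} · cos^{α+1}(β)/(1+R)³ ). -/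
open Real MeasureTheory Set

noncomputable section

namespace Paper

/-- The domain `(0,∞) × (0,π/2)` in the `(R,β)` variables. -/
def Qdom : Set (ℝ × ℝ) := Set.Ioi (0:ℝ) ×ˢ Set.Ioo (0:ℝ) (Real.pi/2)

/-- Inner product `⟨f,g⟩ = ∫₀^∞ ∫₀^{π/2} f g dβ dR`. -/
def inner2 (f g : ℝ → ℝ → ℝ) : ℝ :=
  ∫ R in Set.Ioi (0:ℝ), ∫ β in Set.Ioo (0:ℝ) (Real.pi/2), f R β * g R β

/-- The `L²` norm `‖f‖₂`. -/
def norm2 (f : ℝ → ℝ → ℝ) : ℝ := Real.sqrt (inner2 f f)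

/-- `‖h‖_{L²(R)}` for functions of `R` alone. -/
def normR (h : ℝ → ℝ) : ℝ := Real.sqrt (∫ R in Set.Ioi (0:ℝ), (h R)^2)

/-- `D_R = R ∂_R`. -/
def DR (f : ℝ → ℝ → ℝ) : ℝ → ℝ → ℝ := fun R β => R * deriv (fun r => f r β) R

/-- `D_R` for functions of `R` alone. -/
def DR1 (h : ℝ → ℝ) : ℝ → ℝ := fun R => R * deriv h R

/-- `D_β = sin(2β) ∂_β`. -/
def Dbeta (f : ℝ → ℝ → ℝ) : ℝ → ℝ → ℝ :=
  fun R β => Real.sin (2*β) * deriv (fun b => f R b) β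

/-- `L₁₂(Ω)(R) = ∫_R^∞ ∫₀^{π/2} Ω(s,β) sin(2β) s⁻¹ dβ ds`. -/
def L12 (Ω : ℝ → ℝ → ℝ) (R : ℝ) : ℝ :=
  ∫ s in Set.Ioi R, ∫ β in Set.Ioo (0:ℝ) (Real.pi/2), Ω s β * Real.sin (2*β) / s

/-- `L̃₁₂(Ω)(R) = L₁₂(Ω)(R) − L₁₂(Ω)(0)`. -/
def tL12 (Ω : ℝ → ℝ → ℝ) (R : ℝ) : ℝ := L12 Ω R - L12 Ω 0

/-- Compact support contained in the open domain `(0,∞)×(0,π/2)`. -/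
def suppIn (f : ℝ → ℝ → ℝ) : Prop :=
  ∃ K : Set (ℝ × ℝ), IsCompact K ∧ K ⊆ Qdom ∧ ∀ x y : ℝ, (x, y) ∉ K → f x y = 0

/-- Integrability over the domain. -/
def Integrable2 (f : ℝ → ℝ → ℝ) : Prop :=
  MeasureTheory.IntegrableOn (Function.uncurry f) Qdom

/-- `Γ(β) = (cos β)^α`. -/
def Γf (α : ℝ) (β : ℝ) : ℝ := Real.cos β ^ α

/-- The normalizing constant `c = (2/π)∫₀^{π/2} Γ(β) sin(2β) dβ`. -/
def cst (α : ℝ) : ℝ :=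
  (2/Real.pi) * ∫ β in Set.Ioo (0:ℝ) (Real.pi/2), Γf α β * Real.sin (2*β)

/-- The approximate profile `Ω̄`. -/
def Ωbar (α : ℝ) : ℝ → ℝ → ℝ := fun R β => (α / cst α) * Γf α β * (3*R/(1+R)^2)

/-- The approximate profile `η̄`. -/
def ηbar (α : ℝ) : ℝ → ℝ → ℝ := fun R β => (α / cst α) * Γf α β * (6*R/(1+R)^3)

/-- The singular weight `φ₁ = (1+R)⁴R⁻⁴ sin(2β)^{-σ}`, `σ = 99/100`. -/
def phi1 : ℝ → ℝ → ℝ := fun R β => (1+R)^4 / R^4 * Real.sin (2*β) ^ (-(99/100 : ℝ))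

/-- The singular weight `φ₂ = (1+R)⁴R⁻⁴ sin(2β)^{-γ}`, `γ = 1 + α/10`. -/
def phi2 (α : ℝ) : ℝ → ℝ → ℝ := fun R β => (1+R)^4 / R^4 * Real.sin (2*β) ^ (-(1 + α/10))

/-- The singular weight `ψ₁ = (1+R)⁴R⁻⁴ (sin β cos β)^{-σ}`. -/
def psi1 : ℝ → ℝ → ℝ := fun R β =>
  (1+R)^4 / R^4 * (Real.sin β * Real.cos β) ^ (-(99/100 : ℝ))

/-- The singular weight `ψ₂ = (1+R)⁴R⁻⁴ (sin β)^{-σ}(cos β)^{-γ}`. -/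
def psi2 (α : ℝ) : ℝ → ℝ → ℝ := fun R β =>
  (1+R)^4 / R^4 * Real.sin β ^ (-(99/100 : ℝ)) * Real.cos β ^ (-(1 + α/10))

/-- `c_ω = −(2/(πα)) L₁₂(Ω)(0)`. -/
def cω (α : ℝ) (Ω : ℝ → ℝ → ℝ) : ℝ := -(2/(Real.pi*α)) * L12 Ω 0

/-- The linearized operator `L₁`. -/
def opL1 (α : ℝ) (Ω η : ℝ → ℝ → ℝ) : ℝ → ℝ → ℝ := fun R β =>
  - DR Ω R β - (3/(1+R)) * Dbeta Ω R β - Ω R β + η R β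
  + cω α Ω * (Ωbar α R β - DR (Ωbar α) R β)

/-- The linearized operator `L₂`. -/
def opL2 (α : ℝ) (Ω η : ℝ → ℝ → ℝ) : ℝ → ℝ → ℝ := fun R β =>
  - DR η R β - (3/(1+R)) * Dbeta η R β + (-2 + 3/(1+R)) * η R β
  + (2/(Real.pi*α)) * tL12 Ω R * ηbar α R β
  + cω α Ω * (ηbar α R β - DR (ηbar α) R β)

/-- `ξ̄` in Cartesian variables. -/
def ξbarC (α : ℝ) (x y : ℝ) : ℝ :=
  -(18*α^2 / cst α) * ∫ z in Set.Ioo (0:ℝ) x,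
      (y/(y^2+z^2)) * (z ^ α * (z^2+y^2) ^ (α/2) / (1 + (z^2+y^2) ^ (α/2))^4)

/-- `ξ̄` in the `(R,β)` variables, via `x = R^{1/α} cos β`, `y = R^{1/α} sin β`. -/
def ξbar (α : ℝ) : ℝ → ℝ → ℝ := fun R β =>
  ξbarC α (R ^ (1/α) * Real.cos β) (R ^ (1/α) * Real.sin β)

/-- The linearized operator `L₃`. -/
def opL3 (α : ℝ) (Ω ξ : ℝ → ℝ → ℝ) : ℝ → ℝ → ℝ := fun R β =>
  - DR ξ R β - (3/(1+R)) * Dbeta ξ R β + (-2 - 3/(1+R)) * ξ R β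
  - (2/(Real.pi*α)) * tL12 Ω R * ξbar α R β
  + cω α Ω * (3 * ξbar α R β - DR (ξbar α) R β)

/-- Weighted Sobolev norm `H^m` with radial weight `w1` and angular weight `w2`:
`‖f‖ = Σ_{0≤k≤m} ‖(D_R^k f)√w1‖₂ + Σ_{i+j≤m−1} ‖(D_R^i D_β^{j+1} f)√w2‖₂`. -/
def Hnorm (m : ℕ) (w1 w2 : ℝ → ℝ → ℝ) (f : ℝ → ℝ → ℝ) : ℝ :=
  (∑ k ∈ Finset.range (m+1),
    norm2 (fun R β => DR^[k] f R β * Real.sqrt (w1 R β)))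
  + ∑ p ∈ (Finset.range (m+1) ×ˢ Finset.range (m+1)).filter
      (fun p => p.1 + p.2 + 1 ≤ m),
      norm2 (fun R β => DR^[p.1] (Dbeta^[p.2+1] f) R β * Real.sqrt (w2 R β))

/-- Sup of `|f|` over the domain `(0,∞)×(0,π/2)`. -/
def supDom (f : ℝ → ℝ → ℝ) : ℝ :=
  ⨆ (R : Set.Ioi (0:ℝ)) (β : Set.Ioo (0:ℝ) (Real.pi/2)), |f R.1 β.1|

/-- The weighted `C¹` norm. -/
def C1norm (α : ℝ) (f : ℝ → ℝ → ℝ) : ℝ :=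
  supDom f + supDom (fun R β => (1+R)/R * DR f R β)
  + supDom (fun R β =>
      (1 + (R * Real.sin (2*β) ^ α) ^ (-(1/40 : ℝ))) * Dbeta f R β)

/-- Boundedness of `f` on the domain. -/
def BddDom (f : ℝ → ℝ → ℝ) : Prop :=
  ∃ M : ℝ, ∀ R ∈ Set.Ioi (0:ℝ), ∀ β ∈ Set.Ioo (0:ℝ) (Real.pi/2), |f R β| ≤ M

/-- Finiteness of the weighted `C¹` norm. -/
def C1Fin (α : ℝ) (f : ℝ → ℝ → ℝ) : Prop :=
  BddDom f ∧ BddDom (fun R β => (1+R)/R * DR f R β) ∧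
  BddDom (fun R β => (1 + (R * Real.sin (2*β) ^ α) ^ (-(1/40 : ℝ))) * Dbeta f R β)

/-- The weighted `W^{l,∞}` norm. -/
def Wnorm (α : ℝ) (l : ℕ) (f : ℝ → ℝ → ℝ) : ℝ :=
  (∑ k ∈ Finset.range (l+1), supDom (DR^[k] f))
  + ∑ p ∈ (Finset.range (l+1) ×ˢ Finset.range (l+1)).filter
      (fun p => p.1 + p.2 ≤ l ∧ 1 ≤ p.2),
      supDom (fun R β => Real.sin (2*β) ^ (-(α/5)) *
        DR^[p.1] (fun R' β' => Dbeta^[p.2] f R' β' / (α/10 + Real.sin (2*β'))) R β)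

/-- Finiteness of the `W^{l,∞}` norm. -/
def WFin (α : ℝ) (l : ℕ) (f : ℝ → ℝ → ℝ) : Prop :=
  (∀ k ≤ l, BddDom (DR^[k] f)) ∧
  ∀ k j : ℕ, k + j ≤ l → 1 ≤ j →
    BddDom (fun R β => Real.sin (2*β) ^ (-(α/5)) *
      DR^[k] (fun R' β' => Dbeta^[j] f R' β' / (α/10 + Real.sin (2*β'))) R β)

/-- `I(f)(x,y) = ∫₀ˣ f(z,y)/z dz`. -/
def Ifun (f : ℝ → ℝ → ℝ) : ℝ → ℝ → ℝ := fun x y => ∫ z in Set.Ioo (0:ℝ) x, f z y / z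

/-- `D_S g = (1/α)(z ∂_z g + y ∂_y g)` in Cartesian variables. -/
def DScart (α : ℝ) (g : ℝ → ℝ → ℝ) : ℝ → ℝ → ℝ := fun a b =>
  (1/α) * (a * deriv (fun a' => g a' b) a + b * deriv (fun b' => g a b') b)

/-- `D_τ g = 2y ∂_y g − 2α (y²/(y²+z²)) D_S g` in Cartesian variables. -/
def DTcart (α : ℝ) (g : ℝ → ℝ → ℝ) : ℝ → ℝ → ℝ := fun a b =>
  2*b * deriv (fun b' => g a b') b - 2*α*(b^2/(b^2+a^2)) * DScart α g a b

/-!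
Write `S(z) = (z² + y²)^{α/2}`, so that `S(x) = R`. Since `y^α ≤ S(z) ≤ R` on `[0, x]`, the factors
`S/(1+S)` and `1/(1+S)³` of the integrand are bounded by their values at `R` and `y^α`, which leaves
the integral of `(z/y)^α · y/(y²+z²)`. On `[0, y]` this is elementary. On `[y, x]` it is only
bounded by `1/(1-α)`, but the other bound `1/α` comes from keeping the radial factors: there the
integrand is at most `(y^α/α) · S'/(1+S)⁴`. As `α · (1/α) + (1-α) · (1/(1-α)) = 2`, the estimate is
uniform in `α ∈ (0, 1]`. The polar form follows from `y^α = R sin^α β` and `x/y = cos β / sin β`.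
-/

lemma integral_cos_rpow_mul_sin {p : ℝ} (hp : -1 < p) :
    ∫ β in (0:ℝ)..(π / 2), cos β ^ p * sin β = 1 / (p + 1) := by
  have hp' : 0 < p + 1 := by linarith
  have hcont : ContinuousOn (fun β => -(cos β ^ (p + 1) / (p + 1))) (Icc 0 (π / 2)) :=
    ((continuous_cos.rpow_const fun _ => Or.inr hp'.le).div_const _).neg.continuousOn
  have hcos : ∀ β ∈ Ioo 0 (π / 2), 0 < cos β := fun β hβ =>
    cos_pos_of_mem_Ioo ⟨by linarith [hβ.1, pi_pos], hβ.2⟩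
  have hderiv : ∀ β ∈ Ioo 0 (π / 2),
      HasDerivAt (fun β => -(cos β ^ (p + 1) / (p + 1))) (cos β ^ p * sin β) β := by
    intro β hβ
    refine (((hasDerivAt_cos β).rpow_const (p := p + 1)
      (Or.inl (hcos β hβ).ne')).div_const (p + 1)).neg.congr_deriv ?_
    rw [add_sub_cancel_right]
    field_simp
  have hint : IntegrableOn (fun β => cos β ^ p * sin β) (Ioc 0 (π / 2)) :=
    intervalIntegral.integrableOn_deriv_of_nonneg hcont hderiv fun β hβ =>
      mul_nonneg (rpow_nonneg (hcos β hβ).le _)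
        (sin_nonneg_of_nonneg_of_le_pi hβ.1.le (by linarith [hβ.2, pi_pos]))
  rw [intervalIntegral.integral_eq_sub_of_hasDerivAt_of_le (by positivity) hcont hderiv
    ((intervalIntegrable_iff_integrableOn_Ioc_of_le (by positivity)).2 hint)]
  simp [zero_rpow hp'.ne']

lemma cst_eq {α : ℝ} (hα : -2 < α) : cst α = 4 / (π * (α + 2)) := by
  have hΓ : ∀ β ∈ Ioo 0 (π / 2), Γf α β * sin (2 * β) = 2 * (cos β ^ (α + 1) * sin β) := by
    intro β hβ
    have hcos : 0 < cos β := cos_pos_of_mem_Ioo ⟨by linarith [hβ.1, pi_pos], hβ.2⟩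
    rw [Γf, sin_two_mul, rpow_add_one hcos.ne']
    ring
  have hα' : α + 2 ≠ 0 := by linarith
  rw [cst, setIntegral_congr_fun measurableSet_Ioo hΓ, ← integral_Ioc_eq_integral_Ioo,
    ← intervalIntegral.integral_of_le (by positivity), intervalIntegral.integral_const_mul,
    integral_cos_rpow_mul_sin (by linarith), add_assoc, one_add_one_eq_two]
  field_simp
  norm_num

lemma cst_nonneg (α : ℝ) : 0 ≤ cst α := by
  refine mul_nonneg (by positivity) (setIntegral_nonneg measurableSet_Ioo fun β hβ => ?_)
  exact mul_nonneg (rpow_nonneg (cos_nonneg_of_mem_Icc ⟨by linarith [hβ.1, pi_pos], hβ.2.le⟩) _)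
    (sin_nonneg_of_nonneg_of_le_pi (by linarith [hβ.1]) (by linarith [hβ.2]))

/-- The paper's radial variable `R` as a function of the Cartesian variables. -/
def radial (α x y : ℝ) : ℝ := (x^2 + y^2) ^ (α / 2)

lemma radial_nonneg (α x y : ℝ) : 0 ≤ radial α x y := by
  unfold radial; positivity

lemma radial_mono {α a b y : ℝ} (hα : 0 ≤ α) (ha : 0 ≤ a) (hab : a ≤ b) :
    radial α a y ≤ radial α b y := by
  unfold radial; gcongr

lemma rpow_le_radial {α y : ℝ} (hα : 0 ≤ α) (hy : 0 ≤ y) (x : ℝ) : y ^ α ≤ radial α x y := by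
  rw [radial, rpow_div_two_eq_sqrt _ (by positivity)]
  exact rpow_le_rpow hy (le_sqrt_of_sq_le (by linarith [sq_nonneg x])) hα

lemma continuous_radial {α : ℝ} (hα : 0 ≤ α) (y : ℝ) : Continuous fun x => radial α x y :=
  Continuous.rpow_const (by fun_prop) fun _ => Or.inr (by positivity)

lemma hasDerivAt_radial (α x : ℝ) {y : ℝ} (hy : y ≠ 0) :
    HasDerivAt (fun z => radial α z y) (α * x * radial α x y / (x^2 + y^2)) x := by
  have hr : 0 < x^2 + y^2 := by positivity
  refine ((hasDerivAt_pow 2 x).add_const (y^2)).rpow_const (p := α / 2)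
    (Or.inl hr.ne') |>.congr_deriv ?_
  rw [radial, rpow_sub_one hr.ne']
  push_cast
  ring

/-- The integrand of `ξbarC`, as a function of the integration variable `z`. -/
def ξkernel (α y z : ℝ) : ℝ :=
  (y / (y^2 + z^2)) * (z ^ α * radial α z y / (1 + radial α z y)^4)

/-- The part of the bound for `ξbarC` that depends on the radial variables `(x²+y²)^{α/2}` and `y^α`
only. -/
def radialEnvelope (α x y : ℝ) : ℝ :=
  radial α x y / (1 + radial α x y) * (y ^ α / (1 + y ^ α)^3)

lemma ξkernel_nonneg (α : ℝ) {y z : ℝ} (hy : 0 ≤ y) (hz : 0 ≤ z) : 0 ≤ ξkernel α y z := by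
  have := radial_nonneg α z y
  unfold ξkernel; positivity

lemma radialEnvelope_nonneg (α x : ℝ) {y : ℝ} (hy : 0 ≤ y) : 0 ≤ radialEnvelope α x y := by
  have := radial_nonneg α x y
  unfold radialEnvelope; positivity

lemma continuous_ξkernel {α y : ℝ} (hα : 0 ≤ α) (hy : y ≠ 0) : Continuous (ξkernel α y) := by
  have hR := continuous_radial hα y
  have : Continuous fun z : ℝ => z ^ α := continuous_rpow_const hα
  refine .mul (.div (by fun_prop) (by fun_prop) fun z => by positivity)
    (.div (by fun_prop) (by fun_prop) fun z => ?_)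
  have := radial_nonneg α z y
  positivity

lemma ξkernel_le_radialEnvelope_mul {α x y z : ℝ} (hα : 0 ≤ α) (hy : 0 < y) (hz : 0 ≤ z)
    (hzx : z ≤ x) :
    ξkernel α y z ≤ radialEnvelope α x y * ((z / y) ^ α * (y / (y^2 + z^2))) := by
  have hYS : y ^ α ≤ radial α z y := rpow_le_radial hα hy.le z
  have hSR : radial α z y ≤ radial α x y := radial_mono hα hz hzx
  have hY : 0 < y ^ α := rpow_pos_of_pos hy α
  rw [ξkernel, radialEnvelope, div_rpow hz hy.le]
  generalize radial α z y = S at *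
  generalize radial α x y = R at *
  generalize y ^ α = Y at *
  have hS : 0 < S := by linarith
  have hR : 0 < R := by linarith
  have hfrac : S / (1 + S) ≤ R / (1 + R) := by
    rw [div_le_div_iff₀ (by positivity) (by positivity)]
    linarith
  calc y / (y^2 + z^2) * (z ^ α * S / (1 + S)^4)
      = S / (1 + S) * (1 / (1 + S)^3) * (z ^ α * (y / (y^2 + z^2))) := by field_simp
    _ ≤ R / (1 + R) * (1 / (1 + Y)^3) * (z ^ α * (y / (y^2 + z^2))) := by gcongr
    _ = R / (1 + R) * (Y / (1 + Y)^3) * (z ^ α / Y * (y / (y^2 + z^2))) := by field_simp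

lemma integral_ξkernel_zero_le {α a x y : ℝ} (hα : 0 ≤ α) (hy : 0 < y) (ha : 0 ≤ a) (hax : a ≤ x) :
    ∫ z in (0:ℝ)..a, ξkernel α y z ≤ radialEnvelope α x y * (a ^ (1 + α) / y ^ (1 + α)) := by
  have hE := radialEnvelope_nonneg α x hy.le
  have hle : ∀ z ∈ Icc 0 a, ξkernel α y z ≤ radialEnvelope α x y / y ^ (1 + α) * z ^ α := by
    intro z hz
    have hfrac : y / (y^2 + z^2) ≤ 1 / y := by
      rw [div_le_div_iff₀ (by positivity) hy]
      linarith [sq_nonneg z]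
    have hzy : 0 ≤ (z / y) ^ α := rpow_nonneg (div_nonneg hz.1 hy.le) α
    calc ξkernel α y z ≤ radialEnvelope α x y * ((z / y) ^ α * (y / (y^2 + z^2))) :=
          ξkernel_le_radialEnvelope_mul hα hy hz.1 (hz.2.trans hax)
      _ ≤ radialEnvelope α x y * ((z / y) ^ α * (1 / y)) := by gcongr
      _ = radialEnvelope α x y / y ^ (1 + α) * z ^ α := by
          rw [div_rpow hz.1 hy.le, rpow_add hy, rpow_one]
          field_simp
  calc ∫ z in (0:ℝ)..a, ξkernel α y z
      ≤ ∫ z in (0:ℝ)..a, radialEnvelope α x y / y ^ (1 + α) * z ^ α :=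
        intervalIntegral.integral_mono_on ha ((continuous_ξkernel hα hy.ne').intervalIntegrable _ _)
          ((continuous_const.mul (continuous_rpow_const hα)).intervalIntegrable _ _) hle
    _ = radialEnvelope α x y / y ^ (1 + α) * (a ^ (1 + α) / (1 + α)) := by
        rw [intervalIntegral.integral_const_mul, integral_rpow (Or.inl (by linarith)),
          zero_rpow (by linarith), sub_zero, add_comm α 1]
    _ ≤ radialEnvelope α x y / y ^ (1 + α) * a ^ (1 + α) := by
        gcongr
        exact div_le_self (by positivity) (by linarith)
    _ = radialEnvelope α x y * (a ^ (1 + α) / y ^ (1 + α)) := by ring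

lemma one_sub_mul_integral_ξkernel_le {α x y : ℝ} (hα : 0 ≤ α) (hα1 : α ≤ 1) (hy : 0 < y)
    (hyx : y ≤ x) :
    (1 - α) * ∫ z in y..x, ξkernel α y z ≤ radialEnvelope α x y := by
  set E := radialEnvelope α x y
  have hE : 0 ≤ E := radialEnvelope_nonneg α x hy.le
  have hderiv : ∀ z, 0 < z → HasDerivAt (fun z => -E * (z / y) ^ (α - 1))
      ((1 - α) * E * ((z / y) ^ (α - 2) / y)) z := by
    intro z hz
    refine (((hasDerivAt_id' z).div_const y).rpow_const (p := α - 1)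
      (Or.inl (div_pos hz hy).ne')).const_mul (-E) |>.congr_deriv ?_
    rw [sub_sub, one_add_one_eq_two]
    ring
  have hle : ∀ z ∈ Ioo y x, (1 - α) * ξkernel α y z ≤ (1 - α) * E * ((z / y) ^ (α - 2) / y) := by
    intro z hz
    have hz0 : 0 < z := hy.trans hz.1
    rw [mul_assoc]
    refine mul_le_mul_of_nonneg_left ?_ (by linarith)
    calc ξkernel α y z ≤ E * ((z / y) ^ α * (y / (y^2 + z^2))) :=
          ξkernel_le_radialEnvelope_mul hα hy hz0.le hz.2.le
      _ ≤ E * ((z / y) ^ α * (y / z^2)) := by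
          gcongr
          exact le_add_of_nonneg_left (sq_nonneg y)
      _ = E * ((z / y) ^ (α - 2) / y) := by
          rw [rpow_sub (div_pos hz0 hy), rpow_two]
          field_simp
  calc (1 - α) * ∫ z in y..x, ξkernel α y z = ∫ z in y..x, (1 - α) * ξkernel α y z := by
        rw [intervalIntegral.integral_const_mul]
    _ ≤ -E * (x / y) ^ (α - 1) - -E * (y / y) ^ (α - 1) :=
        intervalIntegral.integral_le_sub_of_hasDeriv_right_of_le hyx
          (fun z hz => (hderiv z (hy.trans_le hz.1)).continuousAt.continuousWithinAt)
          (fun z hz => (hderiv z (hy.trans hz.1)).hasDerivWithinAt)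
          (continuous_const.mul (continuous_ξkernel hα hy.ne')).continuousOn.integrableOn_Icc hle
    _ = E - E * (x / y) ^ (α - 1) := by
        rw [div_self hy.ne', one_rpow]
        ring
    _ ≤ E := sub_le_self _ (mul_nonneg hE (rpow_nonneg (div_nonneg (hy.le.trans hyx) hy.le) _))

lemma mul_ξkernel_le {α y z : ℝ} (hα : 0 ≤ α) (hα1 : α ≤ 1) (hy : 0 < y) (hyz : y ≤ z) :
    α * ξkernel α y z ≤ y ^ α / (1 + y ^ α)^2 *
      (α * z * radial α z y / (z^2 + y^2) / (1 + radial α z y)^2) := by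
  have hz : 0 < z := hy.trans_le hyz
  have hYS : y ^ α ≤ radial α z y := rpow_le_radial hα hy.le z
  have hY : 0 < y ^ α := rpow_pos_of_pos hy α
  have hpow : y * z ^ α ≤ z * y ^ α := by
    have hanti : z ^ (α - 1) ≤ y ^ (α - 1) :=
      rpow_le_rpow_of_nonpos hy hyz (by linarith)
    rw [rpow_sub_one hz.ne', rpow_sub_one hy.ne', div_le_div_iff₀ hz hy] at hanti
    linarith
  rw [ξkernel]
  generalize radial α z y = S at *
  generalize y ^ α = Y at *
  have hS : 0 < S := hY.trans_le hYS
  calc α * (y / (y^2 + z^2) * (z ^ α * S / (1 + S)^4))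
      = α * (y * z ^ α) * S / (z^2 + y^2) / ((1 + S)^2 * (1 + S)^2) := by
        rw [add_comm (y^2)]
        field_simp
    _ ≤ α * (z * Y) * S / (z^2 + y^2) / ((1 + Y)^2 * (1 + S)^2) := by gcongr
    _ = Y / (1 + Y)^2 * (α * z * S / (z^2 + y^2) / (1 + S)^2) := by field_simp

lemma mul_integral_ξkernel_le {α x y : ℝ} (hα : 0 ≤ α) (hα1 : α ≤ 1) (hy : 0 < y) (hyx : y ≤ x) :
    α * ∫ z in y..x, ξkernel α y z ≤ radialEnvelope α x y := by
  have hY : 0 < y ^ α := rpow_pos_of_pos hy α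
  have hpos : ∀ z, 0 < 1 + radial α z y := fun z => by linarith [radial_nonneg α z y]
  set K := y ^ α / (1 + y ^ α)^2 with hK_def
  have hderiv : ∀ z, HasDerivAt (fun z => -K * (1 + radial α z y)⁻¹)
      (K * (α * z * radial α z y / (z^2 + y^2) / (1 + radial α z y)^2)) z := by
    intro z
    refine (((hasDerivAt_radial α z hy.ne').const_add 1).fun_inv (hpos z).ne').const_mul (-K)
      |>.congr_deriv ?_
    ring
  calc α * ∫ z in y..x, ξkernel α y z = ∫ z in y..x, α * ξkernel α y z := by
        rw [intervalIntegral.integral_const_mul]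
    _ ≤ -K * (1 + radial α x y)⁻¹ - -K * (1 + radial α y y)⁻¹ :=
        intervalIntegral.integral_le_sub_of_hasDeriv_right_of_le hyx
          (fun z _ => (hderiv z).continuousAt.continuousWithinAt)
          (fun z _ => (hderiv z).hasDerivWithinAt)
          (continuous_const.mul (continuous_ξkernel hα hy.ne')).continuousOn.integrableOn_Icc
          (fun z hz => mul_ξkernel_le hα hα1 hy hz.1.le)
    _ = K * ((1 + radial α y y)⁻¹ - (1 + radial α x y)⁻¹) := by ring
    _ ≤ K * ((1 + y ^ α)⁻¹ - (1 + radial α x y)⁻¹) := by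
        gcongr
        exact rpow_le_radial hα hy.le y
    _ = K * ((radial α x y - y ^ α) / ((1 + y ^ α) * (1 + radial α x y))) := by
        rw [inv_sub_inv (by positivity) (hpos x).ne', add_sub_add_left_eq_sub]
    _ ≤ K * (radial α x y / ((1 + y ^ α) * (1 + radial α x y))) := by
        have := hpos x
        gcongr
        exact sub_le_self _ hY.le
    _ = radialEnvelope α x y := by
        have := hpos x
        rw [hK_def, radialEnvelope]
        field_simp

lemma integral_ξkernel_le {α x y : ℝ} (hα : 0 ≤ α) (hα1 : α ≤ 1) (hx : 0 ≤ x) (hy : 0 < y) :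
    ∫ z in (0:ℝ)..x, ξkernel α y z ≤
      3 * (radialEnvelope α x y * min 1 (x ^ (1 + α) / y ^ (1 + α))) := by
  have hE := radialEnvelope_nonneg α x hy.le
  have hy' : 0 < y ^ (1 + α) := by positivity
  rcases le_total x y with hxy | hyx
  · have hratio : x ^ (1 + α) / y ^ (1 + α) ≤ 1 :=
      (div_le_one hy').2 (rpow_le_rpow hx hxy (by linarith))
    rw [min_eq_right hratio]
    have hnonneg : 0 ≤ radialEnvelope α x y * (x ^ (1 + α) / y ^ (1 + α)) := by positivity
    linarith [integral_ξkernel_zero_le hα hy hx le_rfl]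
  · have hratio : 1 ≤ x ^ (1 + α) / y ^ (1 + α) :=
      (one_le_div hy').2 (rpow_le_rpow hy.le hyx (by linarith))
    rw [min_eq_left hratio]
    have hint : ∀ a b, IntervalIntegrable (ξkernel α y) volume a b :=
      (continuous_ξkernel hα hy.ne').intervalIntegrable
    have hnear := integral_ξkernel_zero_le hα hy hy.le hyx
    rw [div_self hy'.ne'] at hnear
    rw [← intervalIntegral.integral_add_adjacent_intervals (hint 0 y) (hint y x)]
    linarith [one_sub_mul_integral_ξkernel_le hα hα1 hy hyx,
      mul_integral_ξkernel_le hα hα1 hy hyx]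

lemma ξbarC_nonpos (α x : ℝ) {y : ℝ} (hy : 0 ≤ y) : ξbarC α x y ≤ 0 := by
  have hint : 0 ≤ ∫ z in Ioo 0 x, ξkernel α y z :=
    setIntegral_nonneg measurableSet_Ioo fun z hz => ξkernel_nonneg α hy hz.1.le
  have := cst_nonneg α
  exact mul_nonpos_of_nonpos_of_nonneg (neg_nonpos.2 (by positivity)) hint

lemma abs_ξbarC_le {α x y : ℝ} (hα : 0 ≤ α) (hα1 : α ≤ 1) (hx : 0 ≤ x) (hy : 0 < y) :
    |ξbarC α x y| ≤
      162 * α^2 * (radialEnvelope α x y * min 1 (x ^ (1 + α) / y ^ (1 + α))) := by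
  have hcoef : 18 * α^2 / cst α ≤ 54 * α^2 := by
    rw [cst_eq (by linarith)]
    calc 18 * α^2 / (4 / (π * (α + 2))) = 18 * α^2 * (π * (α + 2)) / 4 := by
          rw [div_div_eq_mul_div]
      _ ≤ 18 * α^2 * (4 * (1 + 2)) / 4 := by
          gcongr
          exact pi_le_four
      _ = 54 * α^2 := by ring
  have hint : 0 ≤ ∫ z in (0:ℝ)..x, ξkernel α y z :=
    intervalIntegral.integral_nonneg hx fun z hz => ξkernel_nonneg α hy.le hz.1
  calc |ξbarC α x y| = 18 * α^2 / cst α * ∫ z in (0:ℝ)..x, ξkernel α y z := by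
        rw [abs_of_nonpos (ξbarC_nonpos α x hy.le), intervalIntegral.integral_of_le hx,
          integral_Ioc_eq_integral_Ioo, ξbarC, neg_mul, neg_neg]
        rfl
    _ ≤ 54 * α^2 * (3 * (radialEnvelope α x y * min 1 (x ^ (1 + α) / y ^ (1 + α)))) :=
        mul_le_mul hcoef (integral_ξkernel_le hα hα1 hx hy) hint (by positivity)
    _ = 162 * α^2 * (radialEnvelope α x y * min 1 (x ^ (1 + α) / y ^ (1 + α))) := by ring

lemma sqrt_one_add_div_sq {x : ℝ} (hx : 0 < x) (y : ℝ) :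
    √(1 + (y / x)^2) = √(x^2 + y^2) / x := by
  rw [← sqrt_sq hx.le, ← sqrt_div' _ (sq_nonneg x), sqrt_sq hx.le]
  congr 1
  field_simp

lemma cos_arctan_div {x : ℝ} (hx : 0 < x) (y : ℝ) :
    cos (arctan (y / x)) = x / √(x^2 + y^2) := by
  rw [cos_arctan, sqrt_one_add_div_sq hx, one_div_div]

lemma sin_arctan_div {x : ℝ} (hx : 0 < x) (y : ℝ) :
    sin (arctan (y / x)) = y / √(x^2 + y^2) := by
  rw [sin_arctan, sqrt_one_add_div_sq hx, div_div_div_cancel_right₀ hx.ne']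

lemma radial_mul_sin_arctan_rpow (α : ℝ) {x y : ℝ} (hx : 0 < x) (hy : 0 ≤ y) :
    radial α x y * sin (arctan (y / x)) ^ α = y ^ α := by
  have hr : 0 < √(x^2 + y^2) := sqrt_pos.2 (by positivity)
  rw [radial, rpow_div_two_eq_sqrt _ (by positivity), sin_arctan_div hx,
    ← mul_rpow hr.le (by positivity), mul_div_cancel₀ _ hr.ne']

lemma rpow_div_rpow_eq_cos_div_sin (p : ℝ) {x y : ℝ} (hx : 0 < x) (hy : 0 ≤ y) :
    x ^ p / y ^ p = cos (arctan (y / x)) ^ p / sin (arctan (y / x)) ^ p := by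
  have hr : 0 < √(x^2 + y^2) := sqrt_pos.2 (by positivity)
  rw [cos_arctan_div hx, sin_arctan_div hx, div_rpow hx.le hr.le, div_rpow hy hr.le,
    div_div_div_cancel_right₀ (by positivity)]

lemma radialEnvelope_eq_sin_arctan (α : ℝ) {x y : ℝ} (hx : 0 < x) (hy : 0 ≤ y) :
    radialEnvelope α x y = radial α x y ^ 2 / (1 + radial α x y) *
      (sin (arctan (y / x)) ^ α / (1 + radial α x y * sin (arctan (y / x)) ^ α)^3) := by
  rw [radialEnvelope, ← radial_mul_sin_arctan_rpow α hx hy]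
  ring

lemma radialEnvelope_mul_le_of_pi_div_four_le_arctan {α x y : ℝ} (hα1 : α ≤ 1)
    (hx : 0 < x) (hβ : π / 4 ≤ arctan (y / x)) :
    radialEnvelope α x y * (x ^ (1 + α) / y ^ (1 + α)) ≤
      16 * (radial α x y ^ 2 / (1 + radial α x y) *
        (cos (arctan (y / x)) ^ (α + 1) / (1 + radial α x y)^3)) := by
  have hy : 0 < y := by
    have : 0 < y / x := arctan_pos.1 (by linarith [pi_pos])
    exact (div_pos_iff_of_pos_right hx).1 this
  rw [radialEnvelope_eq_sin_arctan α hx hy.le, rpow_div_rpow_eq_cos_div_sin _ hx hy.le]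
  have hR := radial_nonneg α x y
  have hsin : 1 / 2 ≤ sin (arctan (y / x)) := by
    rw [← sin_pi_div_six]
    exact sin_le_sin_of_le_of_le_pi_div_two (by linarith [pi_pos]) (arctan_lt_pi_div_two _).le
      (by linarith [pi_pos])
  have hsin_rpow : 1 / 2 ≤ sin (arctan (y / x)) ^ α :=
    hsin.trans (self_le_rpow_of_le_one (by linarith) (sin_le_one _) hα1)
  have hcos : 0 < cos (arctan (y / x)) := cos_arctan_pos _
  rw [rpow_add (x := sin _) (by linarith), rpow_one, add_comm 1 α]
  generalize sin (arctan (y / x)) = s at *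
  generalize cos (arctan (y / x)) = c at *
  generalize radial α x y = R at *
  have : 0 < s := by linarith
  have : 0 < s ^ α := by linarith
  have hhalf : (1 + R) / 2 ≤ 1 + R * s ^ α := by nlinarith
  calc R^2 / (1 + R) * (s ^ α / (1 + R * s ^ α)^3) * (c ^ (α + 1) / (s * s ^ α))
      = R^2 / (1 + R) * (c ^ (α + 1) / (s * (1 + R * s ^ α)^3)) := by field_simp
    _ ≤ R^2 / (1 + R) * (c ^ (α + 1) / (1 / 2 * ((1 + R) / 2)^3)) := by gcongr
    _ = 16 * (R^2 / (1 + R) * (c ^ (α + 1) / (1 + R)^3)) := by field_simp; norm_num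

theorem xibar_pointwise_estimates_general :
    ∃ C : ℝ, ∀ α : ℝ, 0 < α → α ≤ 1 → ∀ x y : ℝ, 0 < x → 0 < y →
      ξbarC α x y ≤ 0 ∧
      |ξbarC α x y| ≤ C * α^2 * ((x^2+y^2) ^ (α/2) / (1 + (x^2+y^2) ^ (α/2)))
          * (y ^ α / (1 + y ^ α)^3) * min 1 (x ^ (1+α) / y ^ (1+α)) ∧
      (let R : ℝ := (x^2+y^2) ^ (α/2)
       let β : ℝ := Real.arctan (y/x)
       |ξbarC α x y| ≤ C * (α^2 * R^2 / (1+R)) *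
          ((if β < Real.pi/4 then Real.sin β ^ α / (1 + R * Real.sin β ^ α)^3 else 0)
            + (if Real.pi/4 ≤ β then Real.cos β ^ (α+1) / (1+R)^3 else 0))) := by
  refine ⟨162 * 16, fun α hα hα1 x y hx hy => ?_⟩
  have hbound := abs_ξbarC_le hα.le hα1 hx.le hy
  have hE := radialEnvelope_nonneg α x hy.le
  refine ⟨ξbarC_nonpos α x hy.le, hbound.trans ?_, ?_⟩
  · calc 162 * α^2 * (radialEnvelope α x y * min 1 (x ^ (1+α) / y ^ (1+α)))
        ≤ 162 * 16 * α^2 * (radialEnvelope α x y * min 1 (x ^ (1+α) / y ^ (1+α))) := by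
          gcongr; norm_num
      _ = _ := by rw [radialEnvelope, radial]; ring
  intro R β
  rcases lt_or_ge β (π / 4) with hβ | hβ
  · rw [if_pos hβ, if_neg hβ.not_ge, add_zero]
    calc |ξbarC α x y| ≤ 162 * α^2 * (radialEnvelope α x y * 1) :=
          hbound.trans (by gcongr; exact min_le_left _ _)
      _ ≤ 162 * 16 * α^2 * radialEnvelope α x y := by
          rw [mul_one]; gcongr; norm_num
      _ = _ := by rw [radialEnvelope_eq_sin_arctan α hx hy.le, radial]; ring
  · rw [if_neg hβ.not_gt, if_pos hβ, zero_add]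
    calc |ξbarC α x y| ≤ 162 * α^2 * (radialEnvelope α x y * (x ^ (1+α) / y ^ (1+α))) :=
          hbound.trans (by gcongr; exact min_le_right _ _)
      _ ≤ 162 * α^2 * (16 * (R^2 / (1 + R) * (cos β ^ (α + 1) / (1 + R)^3))) :=
          mul_le_mul_of_nonneg_left
            (radialEnvelope_mul_le_of_pi_div_four_le_arctan hα1 hx hβ) (by positivity)
      _ = _ := by ring

/-- sign and pointwise decay estimates for `ξ̄`. -/
theorem xibar_pointwise_estimates :
    ∃ C : ℝ, ∀ α : ℝ, 0 < α → α ≤ 1/1000 → ∀ x y : ℝ, 0 < x → 0 < y →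
      ξbarC α x y ≤ 0 ∧
      |ξbarC α x y| ≤ C * α^2 * ((x^2+y^2) ^ (α/2) / (1 + (x^2+y^2) ^ (α/2)))
          * (y ^ α / (1 + y ^ α)^3) * min 1 (x ^ (1+α) / y ^ (1+α)) ∧
      (let R : ℝ := (x^2+y^2) ^ (α/2)
       let β : ℝ := Real.arctan (y/x)
       |ξbarC α x y| ≤ C * (α^2 * R^2 / (1+R)) *
          ((if β < Real.pi/4 then Real.sin β ^ α / (1 + R * Real.sin β ^ α)^3 else 0)
            + (if Real.pi/4 ≤ β then Real.cos β ^ (α+1) / (1+R)^3 else 0))) := by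
  obtain ⟨C, hC⟩ := xibar_pointwise_estimates_general
  exact ⟨C, fun α hα hα1 => hC α hα (by linarith)⟩

end Paper
end
end

section
/- There is an absolute constant C such that for every α ∈ (0, 1/1000] and every twice continuously differentiable ξ with compact support contained in (0,∞)×(0,π/2): sup_{R>0, β∈(0,π/2)} R^{1/2} sin(2β)^{1/4} |ξ(R,β)| ≤ C ‖ξ‖_{H²(ψ)}. -/
/-!
If `u` vanishes at the left endpoint, `u' ≤ w` and `u = w s`, then integrating
`(u g²)' = u' g² + 2 w g (s g') ≤ w (2 g² + (s g')²)` bounds `u g²` pointwise by a weighted integral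
of `g²` and `(s g')²`. With `u = s = R`, `w = 1` this is a trace inequality for `D_R`; with
`u = sin(2β)^{1/2}`, `s = sin(2β)`, `w = sin(2β)^{-1/2}` it is one for `D_β`. Applying the angular
inequality to `f` at fixed `R`, and then the radial one to `f` and `D_β f` at each fixed angle,
bounds `R sin(2β)^{1/2} f²` by the `w`-weighted energies of `f`, `D_R f`, `D_β f` and `D_R D_β f`,
and the singular weights of the Sobolev norm dominate `w`.
-/

open Real MeasureTheory Set

noncomputable section

namespace Paper

open Function (uncurry)
open scoped Topology

section OneDimensional

lemma mul_sq_le_setIntegral_add {S : Set ℝ} {a x : ℝ} {u u' w s g : ℝ → ℝ} (hax : a ≤ x)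
    (hxS : Ioc a x ⊆ S) (hS : MeasurableSet S) (hu : ContinuousOn u (Icc a x)) (hua : u a = 0)
    (hu' : ∀ t ∈ Ioo a x, HasDerivAt u (u' t) t) (hle : ∀ t ∈ Ioo a x, u' t ≤ w t)
    (huw : ∀ t ∈ Ioo a x, u t = w t * s t) (hw : ∀ t ∈ S, 0 ≤ w t) (hg : Differentiable ℝ g)
    (h₀ : IntegrableOn (fun t ↦ w t * g t ^ 2) S)
    (h₁ : IntegrableOn (fun t ↦ w t * (s t * deriv g t) ^ 2) S) :
    u x * g x ^ 2 ≤
      2 * (∫ t in S, w t * g t ^ 2) + ∫ t in S, w t * (s t * deriv g t) ^ 2 := by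
  set φ : ℝ → ℝ := fun t ↦ 2 * (w t * g t ^ 2) + w t * (s t * deriv g t) ^ 2
  have hφ : IntegrableOn φ S := (h₀.const_mul 2).add h₁
  have hφ_nonneg : ∀ t ∈ S, 0 ≤ φ t := fun t ht ↦ by have := hw t ht; positivity
  have hderiv : ∀ t ∈ Ioo a x, HasDerivAt (fun t ↦ u t * g t ^ 2)
      (u' t * g t ^ 2 + u t * (2 * g t * deriv g t)) t := fun t ht ↦
    ((hu' t ht).mul ((hg t).hasDerivAt.pow 2)).congr_deriv (by simp)
  have hderiv_le : ∀ t ∈ Ioo a x, u' t * g t ^ 2 + u t * (2 * g t * deriv g t) ≤ φ t := by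
    intro t ht
    have hwt := hw t (hxS (Ioo_subset_Ioc_self ht))
    calc u' t * g t ^ 2 + u t * (2 * g t * deriv g t)
        ≤ w t * g t ^ 2 + w t * (2 * g t * (s t * deriv g t)) := by
          rw [huw t ht, mul_assoc (w t), mul_left_comm (s t)]
          gcongr
          exact hle t ht
      _ ≤ w t * g t ^ 2 + w t * (g t ^ 2 + (s t * deriv g t) ^ 2) := by
          gcongr
          exact two_mul_le_add_sq _ _
      _ = φ t := by ring
  calc u x * g x ^ 2 = u x * g x ^ 2 - u a * g a ^ 2 := by rw [hua, zero_mul, sub_zero]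
    _ ≤ ∫ t in a..x, φ t :=
        intervalIntegral.sub_le_integral_of_hasDeriv_right_of_le hax
          (hu.mul (hg.continuous.pow 2).continuousOn)
          (fun t ht ↦ (hderiv t ht).hasDerivWithinAt)
          ((integrableOn_Icc_iff_integrableOn_Ioc).2 (hφ.mono_set hxS)) hderiv_le
    _ = ∫ t in Ioc a x, φ t := intervalIntegral.integral_of_le hax
    _ ≤ ∫ t in S, φ t :=
        setIntegral_mono_set hφ (ae_restrict_of_forall_mem hS hφ_nonneg) hxS.eventuallyLE
    _ = 2 * (∫ t in S, w t * g t ^ 2) + ∫ t in S, w t * (s t * deriv g t) ^ 2 := by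
        rw [integral_add (h₀.const_mul 2) h₁, integral_const_mul]

lemma mul_sq_le_integral_Ioi {R : ℝ} {g : ℝ → ℝ} (hR : 0 < R) (hg : Differentiable ℝ g)
    (h₀ : IntegrableOn (fun r ↦ g r ^ 2) (Ioi 0))
    (h₁ : IntegrableOn (fun r ↦ (r * deriv g r) ^ 2) (Ioi 0)) :
    R * g R ^ 2 ≤ 2 * (∫ r in Ioi 0, g r ^ 2) + ∫ r in Ioi 0, (r * deriv g r) ^ 2 := by
  simpa using mul_sq_le_setIntegral_add (u := id) (u' := 1) (w := 1) (s := id) hR.le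
    Ioc_subset_Ioi_self measurableSet_Ioi continuousOn_id rfl (fun t _ ↦ hasDerivAt_id t)
    (fun _ _ ↦ le_rfl) (by simp) (by simp) hg (by simpa using h₀) (by simpa using h₁)

lemma sin_two_mul_pos {β : ℝ} (hβ : β ∈ Ioo 0 (π / 2)) : 0 < sin (2 * β) :=
  sin_pos_of_pos_of_lt_pi (by linarith [hβ.1]) (by linarith [hβ.2])

/-- The weight `sin(2β)^{-1/2}` of the angular trace inequality. Both `ψ₁` and `ψ₂` dominate it,
so it is the only angular weight the decay estimate sees. -/
def angularWeight (β : ℝ) : ℝ := sin (2 * β) ^ (-(1 / 2) : ℝ)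

lemma angularWeight_nonneg {β : ℝ} (hβ : β ∈ Ioo 0 (π / 2)) : 0 ≤ angularWeight β :=
  rpow_nonneg (sin_two_mul_pos hβ).le _

lemma continuousOn_angularWeight : ContinuousOn angularWeight (Ioo 0 (π / 2)) :=
  ContinuousOn.rpow_const (by fun_prop) fun _ hβ ↦ Or.inl (sin_two_mul_pos hβ).ne'

lemma hasDerivAt_sin_two_mul_rpow_half {β : ℝ} (hβ : β ∈ Ioo 0 (π / 2)) :
    HasDerivAt (fun b ↦ sin (2 * b) ^ (1 / 2 : ℝ)) (angularWeight β * cos (2 * β)) β := by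
  have hsin : HasDerivAt (fun b ↦ sin (2 * b)) (cos (2 * β) * 2) β := by
    simpa using ((hasDerivAt_id β).const_mul 2).sin
  refine (hsin.rpow_const (p := 1 / 2) (Or.inl (sin_two_mul_pos hβ).ne')).congr_deriv ?_
  rw [angularWeight, show (1 / 2 - 1 : ℝ) = -(1 / 2) by norm_num]
  ring

lemma sin_two_mul_rpow_half_mul_sq_le {β : ℝ} {g : ℝ → ℝ} (hβ : β ∈ Ioo 0 (π / 2))
    (hg : Differentiable ℝ g)
    (h₀ : IntegrableOn (fun b ↦ angularWeight b * g b ^ 2) (Ioo 0 (π / 2)))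
    (h₁ : IntegrableOn (fun b ↦ angularWeight b * (sin (2 * b) * deriv g b) ^ 2)
      (Ioo 0 (π / 2))) :
    sin (2 * β) ^ (1 / 2 : ℝ) * g β ^ 2 ≤
      2 * (∫ b in Ioo 0 (π / 2), angularWeight b * g b ^ 2) +
        ∫ b in Ioo 0 (π / 2), angularWeight b * (sin (2 * b) * deriv g b) ^ 2 := by
  have hsub : Ioo 0 β ⊆ Ioo 0 (π / 2) := Ioo_subset_Ioo_right hβ.2.le
  refine mul_sq_le_setIntegral_add (u := fun b ↦ sin (2 * b) ^ (1 / 2 : ℝ)) hβ.1.le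
    (Ioc_subset_Ioo_right hβ.2) measurableSet_Ioo ?_ (by simp)
    (fun b hb ↦ hasDerivAt_sin_two_mul_rpow_half (hsub hb)) (fun b hb ↦ ?_) (fun b hb ↦ ?_)
    (fun _ ↦ angularWeight_nonneg) hg h₀ h₁
  · exact ContinuousOn.rpow_const (by fun_prop) fun _ _ ↦ Or.inr (by norm_num)
  · exact mul_le_of_le_one_right (angularWeight_nonneg (hsub hb)) (cos_le_one _)
  · rw [angularWeight, ← rpow_add_one (sin_two_mul_pos (hsub hb)).ne']
    norm_num

end OneDimensional

section Regularity

variable {f g : ℝ → ℝ → ℝ} {n : WithTop ℕ∞}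

lemma suppIn.of_eq_zero_of_eventuallyEq (hf : suppIn f)
    (hfg : ∀ x y, uncurry f =ᶠ[𝓝 (x, y)] 0 → g x y = 0) : suppIn g := by
  obtain ⟨K, hK, hKQ, hfK⟩ := hf
  refine ⟨K, hK, hKQ, fun x y hxy ↦ hfg x y ?_⟩
  filter_upwards [hK.isClosed.isOpen_compl.mem_nhds hxy] with p hp using hfK p.1 p.2 hp

lemma suppIn_DR (hf : suppIn f) : suppIn (DR f) := by
  refine hf.of_eq_zero_of_eventuallyEq fun R β h ↦ ?_
  have hslice : (fun r ↦ f r β) =ᶠ[𝓝 R] fun _ ↦ 0 :=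
    (Continuous.prodMk_left β).tendsto R |>.eventually h
  simp [DR, hslice.deriv_eq]

lemma suppIn_Dbeta (hf : suppIn f) : suppIn (Dbeta f) := by
  refine hf.of_eq_zero_of_eventuallyEq fun R β h ↦ ?_
  have hslice : (fun b ↦ f R b) =ᶠ[𝓝 β] fun _ ↦ 0 :=
    (Continuous.prodMk_right R).tendsto β |>.eventually h
  simp [Dbeta, hslice.deriv_eq]

lemma contDiff_DR (hf : ContDiff ℝ (n + 1) (uncurry f)) : ContDiff ℝ n (uncurry (DR f)) := by
  have hswap : ContDiff ℝ (n + 1) (uncurry fun (p : ℝ × ℝ) r ↦ f r p.2) :=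
    hf.comp (contDiff_snd.prodMk (contDiff_snd.comp contDiff_fst))
  exact contDiff_fst.mul (hswap.fderiv_apply contDiff_fst contDiff_const le_rfl (k := fun _ ↦ 1))

lemma contDiff_Dbeta (hf : ContDiff ℝ (n + 1) (uncurry f)) :
    ContDiff ℝ n (uncurry (Dbeta f)) := by
  have hslice : ContDiff ℝ (n + 1) (uncurry fun (p : ℝ × ℝ) b ↦ f p.1 b) :=
    hf.comp ((contDiff_fst.comp contDiff_fst).prodMk contDiff_snd)
  exact (contDiff_sin.comp (contDiff_const.mul contDiff_snd)).mul
    (hslice.fderiv_apply contDiff_snd contDiff_const le_rfl (k := fun _ ↦ 1))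

lemma integrableOn_of_eq_zero_off_isCompact {X : Type*} [TopologicalSpace X] [T2Space X]
    [MeasurableSpace X] [OpensMeasurableSpace X] {E : Type*} [NormedAddCommGroup E]
    {μ : Measure X} [IsFiniteMeasureOnCompacts μ] {S K : Set X} {h : X → E}
    (hS : MeasurableSet S) (hK : IsCompact K) (hc : ContinuousOn h K) (h₀ : ∀ x ∉ K, h x = 0) :
    IntegrableOn h S μ :=
  (hc.integrableOn_compact' hK hK.measurableSet).of_forall_sdiff_eq_zero hS fun x hx ↦ h₀ x hx.2

lemma measurableSet_Qdom : MeasurableSet Qdom := measurableSet_Ioi.prod measurableSet_Ioo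

lemma suppIn.integrableOn_mul_sq {w : ℝ → ℝ → ℝ} (hs : suppIn g) (hg : Continuous (uncurry g))
    (hw : ContinuousOn (uncurry w) Qdom) :
    IntegrableOn (fun p : ℝ × ℝ ↦ w p.1 p.2 * g p.1 p.2 ^ 2) Qdom := by
  obtain ⟨K, hK, hKQ, hgK⟩ := hs
  exact integrableOn_of_eq_zero_off_isCompact measurableSet_Qdom hK
    ((hw.mono hKQ).mul (hg.pow 2).continuousOn) fun p hp ↦ by simp [hgK p.1 p.2 hp]

lemma suppIn.integrableOn_radial_slice (hs : suppIn g) (hg : Continuous (uncurry g)) (β : ℝ) :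
    IntegrableOn (fun r ↦ g r β ^ 2) (Ioi 0) := by
  obtain ⟨K, hK, -, hgK⟩ := hs
  exact integrableOn_of_eq_zero_off_isCompact measurableSet_Ioi (hK.image continuous_fst)
    ((hg.comp (Continuous.prodMk_left β)).pow 2).continuousOn
    fun r hr ↦ by simp [hgK r β fun h ↦ hr ⟨_, h, rfl⟩]

lemma suppIn.integrableOn_angular_slice {v : ℝ → ℝ} (hs : suppIn g)
    (hg : Continuous (uncurry g)) (hv : ContinuousOn v (Ioo 0 (π / 2))) (R : ℝ) :
    IntegrableOn (fun b ↦ v b * g R b ^ 2) (Ioo 0 (π / 2)) := by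
  obtain ⟨K, hK, hKQ, hgK⟩ := hs
  have hKv : Prod.snd '' K ⊆ Ioo 0 (π / 2) := image_subset_iff.2 fun p hp ↦ (hKQ hp).2
  exact integrableOn_of_eq_zero_off_isCompact measurableSet_Ioo (hK.image continuous_snd)
    ((hv.mono hKv).mul ((hg.comp (Continuous.prodMk_right R)).pow 2).continuousOn)
    fun b hb ↦ by simp [hgK R b fun h ↦ hb ⟨_, h, rfl⟩]

end Regularity

section WeightedEnergy

variable {g w w' : ℝ → ℝ → ℝ} {v : ℝ → ℝ}

/-- The weighted energy `∫₀^∞ ∫₀^{π/2} w g² dβ dR`, written as an integral over the product domain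
so that the two variables can be integrated in either order. -/
def weightedEnergy (w g : ℝ → ℝ → ℝ) : ℝ := ∫ p in Qdom, w p.1 p.2 * g p.1 p.2 ^ 2

lemma weightedEnergy_mono (hs : suppIn g) (hg : Continuous (uncurry g))
    (hw : ContinuousOn (uncurry w) Qdom) (hw' : ContinuousOn (uncurry w') Qdom)
    (hle : ∀ p ∈ Qdom, w p.1 p.2 ≤ w' p.1 p.2) : weightedEnergy w g ≤ weightedEnergy w' g :=
  setIntegral_mono_on (hs.integrableOn_mul_sq hg hw) (hs.integrableOn_mul_sq hg hw')
    measurableSet_Qdom fun p hp ↦ mul_le_mul_of_nonneg_right (hle p hp) (sq_nonneg _)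

lemma norm2_nonneg (f : ℝ → ℝ → ℝ) : 0 ≤ norm2 f := sqrt_nonneg _

lemma norm2_mul_sqrt_sq (hs : suppIn g) (hg : Continuous (uncurry g))
    (hw : ContinuousOn (uncurry w) Qdom) (hw₀ : ∀ p ∈ Qdom, 0 ≤ w p.1 p.2) :
    norm2 (fun R β ↦ g R β * √(w R β)) ^ 2 = weightedEnergy w g := by
  have hinner : inner2 (fun R β ↦ g R β * √(w R β)) (fun R β ↦ g R β * √(w R β)) =
      weightedEnergy w g := by
    rw [weightedEnergy, Qdom, Measure.volume_eq_prod,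
      setIntegral_prod _ (hs.integrableOn_mul_sq hg hw)]
    refine setIntegral_congr_fun measurableSet_Ioi fun R hR ↦
      setIntegral_congr_fun measurableSet_Ioo fun β hβ ↦ ?_
    linear_combination (g R β) ^ 2 * mul_self_sqrt (hw₀ (R, β) ⟨hR, hβ⟩)
  have hnonneg : 0 ≤ weightedEnergy w g := setIntegral_nonneg measurableSet_Qdom fun p hp ↦
    mul_nonneg (hw₀ p hp) (sq_nonneg _)
  rw [norm2, hinner, sq_sqrt hnonneg]

lemma continuousOn_uncurry_const_left (hv : ContinuousOn v (Ioo 0 (π / 2))) :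
    ContinuousOn (uncurry fun _ : ℝ ↦ v) Qdom :=
  hv.comp continuousOn_snd fun _ hp ↦ hp.2

lemma weightedEnergy_eq_integral_angular (hs : suppIn g) (hg : Continuous (uncurry g))
    (hv : ContinuousOn v (Ioo 0 (π / 2))) :
    weightedEnergy (fun _ ↦ v) g = ∫ b in Ioo 0 (π / 2), v b * ∫ r in Ioi 0, g r b ^ 2 := by
  have hint := hs.integrableOn_mul_sq hg (continuousOn_uncurry_const_left hv)
  rw [IntegrableOn, Qdom, Measure.volume_eq_prod, ← Measure.prod_restrict] at hint
  rw [weightedEnergy, Qdom, Measure.volume_eq_prod, ← Measure.prod_restrict,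
    integral_prod_symm _ hint]
  simp only [integral_const_mul]

lemma integrableOn_mul_integral_radial (hs : suppIn g) (hg : Continuous (uncurry g))
    (hv : ContinuousOn v (Ioo 0 (π / 2))) :
    IntegrableOn (fun b ↦ v b * ∫ r in Ioi 0, g r b ^ 2) (Ioo 0 (π / 2)) := by
  have hint := hs.integrableOn_mul_sq hg (continuousOn_uncurry_const_left hv)
  rw [IntegrableOn, Qdom, Measure.volume_eq_prod, ← Measure.prod_restrict] at hint
  have hslices := hint.integral_prod_right
  simp only [integral_const_mul] at hslices
  exact hslices

lemma mul_integral_angular_slice_le (hs : suppIn g) (hg : ContDiff ℝ 1 (uncurry g))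
    (hv : ContinuousOn v (Ioo 0 (π / 2))) (hv₀ : ∀ b ∈ Ioo 0 (π / 2), 0 ≤ v b) {R : ℝ}
    (hR : 0 < R) :
    R * (∫ b in Ioo 0 (π / 2), v b * g R b ^ 2) ≤
      2 * weightedEnergy (fun _ ↦ v) g + weightedEnergy (fun _ ↦ v) (DR g) := by
  have hsD := suppIn_DR hs
  have hgD : Continuous (uncurry (DR g)) := (contDiff_DR (n := 0) (by simpa using hg)).continuous
  have hint := (integrableOn_mul_integral_radial hs hg.continuous hv).const_mul 2
  have hintD := integrableOn_mul_integral_radial hsD hgD hv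
  rw [weightedEnergy_eq_integral_angular hs hg.continuous hv,
    weightedEnergy_eq_integral_angular hsD hgD hv, ← integral_const_mul, ← integral_const_mul,
    ← integral_add hint hintD]
  refine setIntegral_mono_on ((hs.integrableOn_angular_slice hg.continuous hv R).const_mul R)
    (hint.add hintD) measurableSet_Ioo fun b hb ↦ ?_
  have hdiff : Differentiable ℝ fun r ↦ g r b :=
    (hg.comp (contDiff_prodMk_left b)).differentiable one_ne_zero
  have htrace := mul_sq_le_integral_Ioi hR hdiff (hs.integrableOn_radial_slice hg.continuous b)
    (hsD.integrableOn_radial_slice hgD b)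
  calc R * (v b * g R b ^ 2) = v b * (R * g R b ^ 2) := by ring
    _ ≤ v b * (2 * (∫ r in Ioi 0, g r b ^ 2) + ∫ r in Ioi 0, DR g r b ^ 2) :=
        mul_le_mul_of_nonneg_left htrace (hv₀ b hb)
    _ = 2 * (v b * ∫ r in Ioi 0, g r b ^ 2) + v b * ∫ r in Ioi 0, DR g r b ^ 2 := by ring

lemma mul_sin_two_mul_rpow_half_mul_sq_le {f : ℝ → ℝ → ℝ} (hs : suppIn f)
    (hf : ContDiff ℝ 2 (uncurry f)) {R β : ℝ} (hR : 0 < R) (hβ : β ∈ Ioo 0 (π / 2)) :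
    R * sin (2 * β) ^ (1 / 2 : ℝ) * f R β ^ 2 ≤
      4 * weightedEnergy (fun _ ↦ angularWeight) f
        + 2 * weightedEnergy (fun _ ↦ angularWeight) (DR f)
        + 2 * weightedEnergy (fun _ ↦ angularWeight) (Dbeta f)
        + weightedEnergy (fun _ ↦ angularWeight) (DR (Dbeta f)) := by
  have hsD := suppIn_Dbeta hs
  have hf₁ : ContDiff ℝ 1 (uncurry f) := hf.of_le one_le_two
  have hfD : ContDiff ℝ 1 (uncurry (Dbeta f)) := contDiff_Dbeta (by rwa [one_add_one_eq_two])
  have hv := continuousOn_angularWeight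
  have hdiff : Differentiable ℝ (f R) :=
    (hf.comp (contDiff_prodMk_right R)).differentiable two_ne_zero
  have hangular := sin_two_mul_rpow_half_mul_sq_le hβ hdiff
    (hs.integrableOn_angular_slice hf.continuous hv R)
    (hsD.integrableOn_angular_slice hfD.continuous hv R)
  have hradial := mul_integral_angular_slice_le hs hf₁ hv (fun _ ↦ angularWeight_nonneg) hR
  have hradialD := mul_integral_angular_slice_le hsD hfD hv (fun _ ↦ angularWeight_nonneg) hR
  calc R * sin (2 * β) ^ (1 / 2 : ℝ) * f R β ^ 2
      = R * (sin (2 * β) ^ (1 / 2 : ℝ) * f R β ^ 2) := mul_assoc _ _ _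
    _ ≤ R * (2 * (∫ b in Ioo 0 (π / 2), angularWeight b * f R b ^ 2)
          + ∫ b in Ioo 0 (π / 2), angularWeight b * Dbeta f R b ^ 2) :=
        mul_le_mul_of_nonneg_left hangular hR.le
    _ ≤ _ := by linarith

end WeightedEnergy

section SobolevNorm

variable {w₁ w₂ f : ℝ → ℝ → ℝ} {m : ℕ}

lemma norm2_DR_iterate_le_Hnorm {k : ℕ} (hk : k ≤ m) :
    norm2 (fun R β ↦ DR^[k] f R β * √(w₁ R β)) ≤ Hnorm m w₁ w₂ f :=
  (Finset.single_le_sum (f := fun k ↦ norm2 fun R β ↦ DR^[k] f R β * √(w₁ R β))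
    (fun _ _ ↦ norm2_nonneg _) (Finset.mem_range_succ_iff.2 hk)).trans
    (le_add_of_nonneg_right (Finset.sum_nonneg fun _ _ ↦ norm2_nonneg _))

lemma norm2_DR_iterate_Dbeta_iterate_le_Hnorm {i j : ℕ} (hij : i + j + 1 ≤ m) :
    norm2 (fun R β ↦ DR^[i] (Dbeta^[j + 1] f) R β * √(w₂ R β)) ≤ Hnorm m w₁ w₂ f :=
  (Finset.single_le_sum
    (f := fun p : ℕ × ℕ ↦ norm2 fun R β ↦ DR^[p.1] (Dbeta^[p.2 + 1] f) R β * √(w₂ R β))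
    (fun _ _ ↦ norm2_nonneg _) (a := (i, j))
    (by simp only [Finset.mem_filter, Finset.mem_product, Finset.mem_range]; omega)).trans
    (le_add_of_nonneg_left (Finset.sum_nonneg fun _ _ ↦ norm2_nonneg _))

lemma weightedEnergy_angularWeight_le_sq {g w : ℝ → ℝ → ℝ} {H : ℝ} (hs : suppIn g)
    (hg : Continuous (uncurry g)) (hw : ContinuousOn (uncurry w) Qdom)
    (hle : ∀ p ∈ Qdom, angularWeight p.2 ≤ w p.1 p.2)
    (hH : norm2 (fun R β ↦ g R β * √(w R β)) ≤ H) :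
    weightedEnergy (fun _ ↦ angularWeight) g ≤ H ^ 2 :=
  calc weightedEnergy (fun _ ↦ angularWeight) g ≤ weightedEnergy w g :=
        weightedEnergy_mono hs hg (continuousOn_uncurry_const_left continuousOn_angularWeight)
          hw hle
    _ = norm2 (fun R β ↦ g R β * √(w R β)) ^ 2 :=
        (norm2_mul_sqrt_sq hs hg hw fun p hp ↦
          (angularWeight_nonneg hp.2).trans (hle p hp)).symm
    _ ≤ H ^ 2 := pow_le_pow_left₀ (norm2_nonneg _) hH 2

lemma mul_sin_two_mul_rpow_half_mul_sq_le_Hnorm_sq (hm : 2 ≤ m)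
    (hw₁ : ContinuousOn (uncurry w₁) Qdom) (hw₂ : ContinuousOn (uncurry w₂) Qdom)
    (hle₁ : ∀ p ∈ Qdom, angularWeight p.2 ≤ w₁ p.1 p.2)
    (hle₂ : ∀ p ∈ Qdom, angularWeight p.2 ≤ w₂ p.1 p.2)
    (hf : ContDiff ℝ 2 (uncurry f)) (hs : suppIn f)
    {R β : ℝ} (hR : 0 < R) (hβ : β ∈ Ioo 0 (π / 2)) :
    R * sin (2 * β) ^ (1 / 2 : ℝ) * f R β ^ 2 ≤ (3 * Hnorm m w₁ w₂ f) ^ 2 := by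
  have hfR : ContDiff ℝ 1 (uncurry (DR f)) := contDiff_DR (by rwa [one_add_one_eq_two])
  have hfβ : ContDiff ℝ 1 (uncurry (Dbeta f)) := contDiff_Dbeta (by rwa [one_add_one_eq_two])
  have hfRβ : ContDiff ℝ 0 (uncurry (DR (Dbeta f))) := contDiff_DR (by simpa using hfβ)
  have h_f := weightedEnergy_angularWeight_le_sq hs hf.continuous hw₁ hle₁
    (norm2_DR_iterate_le_Hnorm (w₂ := w₂) (k := 0) (by lia : 0 ≤ m))
  have h_R := weightedEnergy_angularWeight_le_sq (suppIn_DR hs) hfR.continuous hw₁ hle₁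
    (norm2_DR_iterate_le_Hnorm (w₂ := w₂) (k := 1) (by lia : 1 ≤ m))
  have h_β := weightedEnergy_angularWeight_le_sq (suppIn_Dbeta hs) hfβ.continuous hw₂ hle₂
    (norm2_DR_iterate_Dbeta_iterate_le_Hnorm (w₁ := w₁) (i := 0) (j := 0) (by lia : 0 + 0 + 1 ≤ m))
  have h_Rβ := weightedEnergy_angularWeight_le_sq (suppIn_DR (suppIn_Dbeta hs)) hfRβ.continuous
    hw₂ hle₂
    (norm2_DR_iterate_Dbeta_iterate_le_Hnorm (w₁ := w₁) (i := 1) (j := 0) (by lia : 1 + 0 + 1 ≤ m))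
  -- `3 ^ 2 = 4 + 2 + 2 + 1`
  linarith [mul_sin_two_mul_rpow_half_mul_sq_le hs hf hR hβ]

theorem xi_decay_estimate_general (hm : 2 ≤ m)
    (hw₁ : ContinuousOn (uncurry w₁) Qdom) (hw₂ : ContinuousOn (uncurry w₂) Qdom)
    (hle₁ : ∀ p ∈ Qdom, angularWeight p.2 ≤ w₁ p.1 p.2)
    (hle₂ : ∀ p ∈ Qdom, angularWeight p.2 ≤ w₂ p.1 p.2)
    (hf : ContDiff ℝ 2 (uncurry f)) (hs : suppIn f)
    {R β : ℝ} (hR : 0 < R) (hβ : β ∈ Ioo 0 (π / 2)) :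
    R ^ (1 / 2 : ℝ) * sin (2 * β) ^ (1 / 4 : ℝ) * |f R β| ≤ 3 * Hnorm m w₁ w₂ f := by
  have hH : 0 ≤ Hnorm m w₁ w₂ f :=
    (norm2_nonneg _).trans (norm2_DR_iterate_le_Hnorm (Nat.zero_le m))
  have hR_sq : (R ^ (1 / 2 : ℝ)) ^ 2 = R := by
    rw [← sqrt_eq_rpow, sq_sqrt hR.le]
  have hsin_sq : (sin (2 * β) ^ (1 / 4 : ℝ)) ^ 2 = sin (2 * β) ^ (1 / 2 : ℝ) := by
    rw [← rpow_mul_natCast (sin_two_mul_pos hβ).le]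
    norm_num
  refine le_of_sq_le_sq ?_ (by positivity)
  rw [mul_pow, mul_pow, hR_sq, hsin_sq, sq_abs]
  exact mul_sin_two_mul_rpow_half_mul_sq_le_Hnorm_sq hm hw₁ hw₂ hle₁ hle₂ hf hs hR hβ

end SobolevNorm

section SingularWeights

lemma sin_pos_and_cos_pos {β : ℝ} (hβ : β ∈ Ioo 0 (π / 2)) : 0 < sin β ∧ 0 < cos β :=
  ⟨sin_pos_of_mem_Ioo ⟨hβ.1, by linarith [hβ.2, pi_pos]⟩,
    cos_pos_of_mem_Ioo ⟨by linarith [hβ.1, pi_pos], hβ.2⟩⟩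

lemma one_le_one_add_pow_div_pow {R : ℝ} (hR : 0 < R) (n : ℕ) : 1 ≤ (1 + R) ^ n / R ^ n := by
  rw [one_le_div (by positivity)]
  gcongr
  linarith

lemma angularWeight_le_sin_mul_cos_rpow {β σ : ℝ} (hβ : β ∈ Ioo 0 (π / 2)) (hσ : 1 / 2 ≤ σ) :
    angularWeight β ≤ (sin β * cos β) ^ (-σ) := by
  have hsc : 0 < sin β * cos β := mul_pos (sin_pos_and_cos_pos hβ).1 (sin_pos_and_cos_pos hβ).2
  have hsin : sin (2 * β) = 2 * (sin β * cos β) := by rw [sin_two_mul, mul_assoc]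
  calc angularWeight β ≤ (sin β * cos β) ^ (-(1 / 2) : ℝ) :=
        rpow_le_rpow_of_nonpos hsc (by linarith) (by norm_num)
    _ ≤ (sin β * cos β) ^ (-σ) :=
        rpow_le_rpow_of_exponent_ge hsc (by linarith [sin_le_one (2 * β)]) (by linarith)

lemma angularWeight_le_sin_rpow_mul_cos_rpow {β σ γ : ℝ} (hβ : β ∈ Ioo 0 (π / 2))
    (hσ : 1 / 2 ≤ σ) (hγ : 1 / 2 ≤ γ) :
    angularWeight β ≤ sin β ^ (-σ) * cos β ^ (-γ) := by
  obtain ⟨hsin, hcos⟩ := sin_pos_and_cos_pos hβ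
  calc angularWeight β ≤ (sin β * cos β) ^ (-(1 / 2) : ℝ) :=
        angularWeight_le_sin_mul_cos_rpow hβ le_rfl
    _ = sin β ^ (-(1 / 2) : ℝ) * cos β ^ (-(1 / 2) : ℝ) := mul_rpow hsin.le hcos.le
    _ ≤ sin β ^ (-σ) * cos β ^ (-γ) :=
        mul_le_mul (rpow_le_rpow_of_exponent_ge hsin (sin_le_one β) (by linarith))
          (rpow_le_rpow_of_exponent_ge hcos (cos_le_one β) (by linarith)) (by positivity)
          (by positivity)

lemma angularWeight_le_psi1 {p : ℝ × ℝ} (hp : p ∈ Qdom) : angularWeight p.2 ≤ psi1 p.1 p.2 := by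
  obtain ⟨hR, hβ⟩ := hp
  have hle := angularWeight_le_sin_mul_cos_rpow (σ := 99 / 100) hβ (by norm_num)
  exact hle.trans (le_mul_of_one_le_left ((angularWeight_nonneg hβ).trans hle)
    (one_le_one_add_pow_div_pow hR 4))

-- `-5 ≤ α` is `1/2 ≤ γ` for the exponent `γ = 1 + α/10` of `cos β` in `ψ₂`.
lemma angularWeight_le_psi2 {α : ℝ} (hα : -5 ≤ α) {p : ℝ × ℝ} (hp : p ∈ Qdom) :
    angularWeight p.2 ≤ psi2 α p.1 p.2 := by
  obtain ⟨hR, hβ⟩ := hp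
  have hle := angularWeight_le_sin_rpow_mul_cos_rpow (σ := 99 / 100) (γ := 1 + α / 10) hβ
    (by norm_num) (by linarith)
  rw [psi2, mul_assoc]
  exact hle.trans (le_mul_of_one_le_left ((angularWeight_nonneg hβ).trans hle)
    (one_le_one_add_pow_div_pow hR 4))

lemma continuousOn_one_add_pow_div_pow (n : ℕ) :
    ContinuousOn (fun p : ℝ × ℝ ↦ (1 + p.1) ^ n / p.1 ^ n) Qdom :=
  ContinuousOn.div (by fun_prop) (by fun_prop) fun _ hp ↦ pow_ne_zero n (ne_of_gt hp.1)

lemma continuousOn_psi1 : ContinuousOn (uncurry psi1) Qdom := by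
  refine (continuousOn_one_add_pow_div_pow 4).mul
    (ContinuousOn.rpow_const (by fun_prop) fun p hp ↦ Or.inl ?_)
  exact (mul_pos (sin_pos_and_cos_pos hp.2).1 (sin_pos_and_cos_pos hp.2).2).ne'

lemma continuousOn_psi2 (α : ℝ) : ContinuousOn (uncurry (psi2 α)) Qdom :=
  ((continuousOn_one_add_pow_div_pow 4).mul
    (ContinuousOn.rpow_const (by fun_prop) fun _ hp ↦
      Or.inl (sin_pos_and_cos_pos hp.2).1.ne')).mul
    (ContinuousOn.rpow_const (by fun_prop) fun _ hp ↦ Or.inl (sin_pos_and_cos_pos hp.2).2.ne')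

end SingularWeights

/-- decay estimate `R^{1/2} sin(2β)^{1/4} |ξ| ≲ ‖ξ‖_{H²(ψ)}`. -/
theorem xi_decay_estimate :
    ∃ C : ℝ, ∀ α : ℝ, 0 < α → α ≤ 1/1000 →
      ∀ ξ : ℝ → ℝ → ℝ, ContDiff ℝ 2 (Function.uncurry ξ) → suppIn ξ →
        ∀ R > (0:ℝ), ∀ β ∈ Set.Ioo (0:ℝ) (Real.pi/2),
          R ^ ((1:ℝ)/2) * Real.sin (2*β) ^ ((1:ℝ)/4) * |ξ R β|
            ≤ C * Hnorm 2 psi1 (psi2 α) ξ :=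
  ⟨3, fun α hα _ _ hξ hs _ hR _ hβ ↦ xi_decay_estimate_general le_rfl continuousOn_psi1
    (continuousOn_psi2 α) (fun _ ↦ angularWeight_le_psi1)
    (fun _ ↦ angularWeight_le_psi2 (by linarith)) hξ hs hR hβ⟩

end Paper
end
end
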